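/- arXiv:2511.12548 — 3 statements merged into one kernel-verified Lean document; each statement's English description precedes it below -/
import Mathlib

section
/- Let f : ℝⁿ → ℝ be differentiable with ∇f Lipschitz with constant L > 0, and let M be a symmetric positive definite n × n matrix with smallest eigenvalue λ_min(M) and spectral norm ‖M‖. If 0 < α ≤ λ_min(M) / (L ‖M‖²), then the update θ⁺ = θ − α M ∇f(θ) satisfies f(θ⁺) ≤ f(θ) − (α/2) λ_min(M) ‖∇f(θ)‖². -/
/-!
The descent lemma bounds `f (θ + d)` by `f θ + ⟪∇f θ, d⟫ + (L / 2) ‖d‖²`. For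
`d = -α M ∇f θ` the linear term is at most `-α λ_min(M) ‖∇f θ‖²` (Rayleigh quotient bound,
`iInf_eigenvalues_mul_sq_le_inner`) and the quadratic term is at most
`(L α² ‖M‖² / 2) ‖∇f θ‖²`, which the stepsize condition bounds by
`(α / 2) λ_min(M) ‖∇f θ‖²`, half of the guaranteed decrease.
-/

/-- The descent lemma: `t ↦ f (x + t d) - t ⟪∇f x, d⟫ - (L / 2) t² ‖d‖²` is antitone on `[0, 1]`,
because its derivative is `⟪∇f (x + t d) - ∇f x, d⟫ - L t ‖d‖² ≤ 0`. -/
theorem descent_lemma {E : Type*} [NormedAddCommGroup E] [InnerProductSpace ℝ E]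
    [CompleteSpace E] {f : E → ℝ} {L : ℝ} (hdiff : Differentiable ℝ f)
    (hlip : ∀ x y, ‖gradient f x - gradient f y‖ ≤ L * ‖x - y‖) (x d : E) :
    f (x + d) ≤ f x + inner ℝ (gradient f x) d + L / 2 * ‖d‖ ^ 2 := by
  have hderiv : ∀ t : ℝ, HasDerivAt
      (fun t : ℝ => f (x + t • d) - t * inner ℝ (gradient f x) d - L / 2 * ‖d‖ ^ 2 * t ^ 2)
      (inner ℝ (gradient f (x + t • d)) d - inner ℝ (gradient f x) d - L * ‖d‖ ^ 2 * t) t := by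
    intro t
    have hline : HasDerivAt (fun t : ℝ => x + t • d) d t := by
      simpa using ((hasDerivAt_id t).smul_const d).const_add x
    have hf := (hdiff (x + t • d)).hasGradientAt.hasFDerivAt.comp_hasDerivAt t hline
    have hlin := (hasDerivAt_id t).mul_const (inner ℝ (gradient f x) d)
    have hsq := (hasDerivAt_pow 2 t).const_mul (L / 2 * ‖d‖ ^ 2)
    refine ((hf.sub hlin).sub hsq).congr_deriv ?_
    simp only [InnerProductSpace.toDual_apply_apply]
    push_cast
    ring
  have hanti := antitoneOn_of_deriv_nonpos (convex_Icc (0 : ℝ) 1)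
    (fun t _ => (hderiv t).continuousAt.continuousWithinAt)
    (fun t _ => (hderiv t).differentiableAt.differentiableWithinAt) (by
      intro t ht
      rw [interior_Icc] at ht
      rw [(hderiv t).deriv, ← inner_sub_left]
      have hcs := real_inner_le_norm (gradient f (x + t • d) - gradient f x) d
      have hgrad := hlip (x + t • d) x
      rw [add_sub_cancel_left, norm_smul, Real.norm_of_nonneg ht.1.le] at hgrad
      nlinarith [mul_le_mul_of_nonneg_right hgrad (norm_nonneg d)])
  have h := hanti (Set.left_mem_Icc.2 zero_le_one) (Set.right_mem_Icc.2 zero_le_one)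
    zero_le_one
  simp only [one_smul, zero_smul, add_zero] at h
  linarith

/-- Rayleigh quotient bound, from expanding `g` in an orthonormal eigenbasis of `M`. -/
theorem iInf_eigenvalues_mul_sq_le_inner {n : ℕ} {M : Matrix (Fin n) (Fin n) ℝ}
    (hM : M.IsHermitian) (g : EuclideanSpace ℝ (Fin n)) :
    (⨅ i, hM.eigenvalues i) * ‖g‖ ^ 2 ≤
      inner ℝ g (Matrix.toEuclideanCLM (𝕜 := ℝ) M g) := by
  have hcoord : ∀ i, inner ℝ (hM.eigenvectorBasis i) (Matrix.toEuclideanCLM (𝕜 := ℝ) M g) =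
      hM.eigenvalues i * inner ℝ (hM.eigenvectorBasis i) g := by
    intro i
    have hsymm : IsSelfAdjoint (Matrix.toEuclideanCLM (n := Fin n) (𝕜 := ℝ) M) :=
      IsSelfAdjoint.map (show IsSelfAdjoint M from hM) _
    have heig : Matrix.toEuclideanCLM (𝕜 := ℝ) M (hM.eigenvectorBasis i) =
        hM.eigenvalues i • hM.eigenvectorBasis i := by
      ext j
      simpa using congrFun (hM.mulVec_eigenvectorBasis i) j
    rw [← hsymm.isSymmetric.apply_clm, heig, real_inner_smul_left]
  rw [← hM.eigenvectorBasis.sum_inner_mul_inner, ← hM.eigenvectorBasis.sum_sq_norm_inner_right g,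
    Finset.mul_sum]
  refine Finset.sum_le_sum fun i _ => ?_
  rw [hcoord, real_inner_comm, Real.norm_eq_abs, sq_abs]
  have hle : ⨅ i, hM.eigenvalues i ≤ hM.eigenvalues i := ciInf_le (Set.finite_range _).bddBelow i
  have := mul_le_mul_of_nonneg_right hle (sq_nonneg (inner ℝ g (hM.eigenvectorBasis i)))
  linarith

/-- **Corollary 1 (Sufficient stepsize).**
If `f : ℝⁿ → ℝ` is differentiable with `L`-Lipschitz gradient (`L > 0`), `M` is symmetric
positive definite with smallest eigenvalue `λ_min(M)` and spectral norm `‖M‖`, and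
`0 < α ≤ λ_min(M) / (L ‖M‖²)`, then `θ⁺ = θ − α M ∇f(θ)` satisfies
`f(θ⁺) ≤ f(θ) − (α/2) λ_min(M) ‖∇f(θ)‖²`. -/
theorem sufficient_stepsize_descent
    (n : ℕ) (f : EuclideanSpace ℝ (Fin n) → ℝ) (L : ℝ) (hL : 0 < L)
    (hdiff : Differentiable ℝ f)
    (hlip : ∀ x y, ‖gradient f x - gradient f y‖ ≤ L * ‖x - y‖)
    (M : Matrix (Fin n) (Fin n) ℝ) (hM : M.PosDef)
    (α : ℝ) (hα : 0 < α)
    (hαle : α ≤ (⨅ i, hM.isHermitian.eigenvalues i) /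
        (L * ‖Matrix.toEuclideanCLM (𝕜 := ℝ) M‖ ^ 2))
    (θ : EuclideanSpace ℝ (Fin n)) :
    f (θ - α • Matrix.toEuclideanCLM (𝕜 := ℝ) M (gradient f θ)) ≤
      f θ - (α / 2) * (⨅ i, hM.isHermitian.eigenvalues i) * ‖gradient f θ‖ ^ 2 := by
  set lam := ⨅ i, hM.isHermitian.eigenvalues i with hlam
  set A := Matrix.toEuclideanCLM (n := Fin n) (𝕜 := ℝ) M with hA
  set g := gradient f θ with hg
  -- If `‖M‖ = 0`, the quotient bounding `α` is `0` by convention, contradicting `0 < α`.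
  have hden : 0 < L * ‖A‖ ^ 2 := by
    refine lt_of_le_of_ne (by positivity) fun h => ?_
    rw [← h, div_zero] at hαle
    linarith
  have hstep : α * (L * ‖A‖ ^ 2) ≤ lam := (le_div_iff₀ hden).1 hαle
  have hray : lam * ‖g‖ ^ 2 ≤ inner ℝ g (A g) := iInf_eigenvalues_mul_sq_le_inner hM.isHermitian g
  have hdesc := descent_lemma hdiff hlip θ (-(α • A g))
  rw [← sub_eq_add_neg, ← hg, inner_neg_right, real_inner_smul_right, norm_neg, norm_smul,
    Real.norm_of_nonneg hα.le] at hdesc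
  have hAg : ‖A g‖ ^ 2 ≤ ‖A‖ ^ 2 * ‖g‖ ^ 2 := by
    rw [← mul_pow]
    gcongr
    exact A.le_opNorm g
  have hquad : L / 2 * (α * ‖A g‖) ^ 2 ≤ α / 2 * (lam * ‖g‖ ^ 2) := calc
    L / 2 * (α * ‖A g‖) ^ 2 = L / 2 * α ^ 2 * ‖A g‖ ^ 2 := by ring
    _ ≤ L / 2 * α ^ 2 * (‖A‖ ^ 2 * ‖g‖ ^ 2) := by gcongr
    _ = α / 2 * (α * (L * ‖A‖ ^ 2) * ‖g‖ ^ 2) := by ring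
    _ ≤ α / 2 * (lam * ‖g‖ ^ 2) := by gcongr
  have hlin := mul_le_mul_of_nonneg_left hray hα.le
  linarith
end

section
/- Let f : ℝⁿ → ℝ be differentiable with ∇f Lipschitz with constant L > 0. Let B be a symmetric n × n matrix with 0 ⪯ B ⪯ L·I (i.e., B positive semidefinite and L·I − B positive semidefinite), let η > 0, and set M = (B + ηI)⁻¹. If 0 < α ≤ η² / (L(L + η)), then the update θ⁺ = θ − α M ∇f(θ) satisfies f(θ⁺) ≤ f(θ) − (α / (2(L + η))) ‖∇f(θ)‖². -/
/-!
The update is controlled by the quadratic upper bound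
`f (x - v) ≤ f x - ⟪∇f x, v⟫ + (L / 2) ‖v‖²` (`le_quadratic_of_lipschitz_gradient`).
With `g = ∇f θ` and `p = M g`, so that `A p = g` for `A = B + η I`, two spectral bounds are needed:
`‖g‖² ≤ (L + η) ⟪g, p⟫`, which comes from `⟪A q, q⟫ ≥ 0` at `q = (L + η) p - g`
(`sq_norm_le_of_symmetric`), and `η ‖p‖ ≤ ‖g‖`, which comes from `η ‖p‖² ≤ ⟪g, p⟫`.
For `v = α p` the linear term then gains at least `α ‖g‖² / (L + η)`, while the stepsize bound makes
the quadratic term at most half of that.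
-/

/-- The descent lemma for a function with `L`-Lipschitz gradient. -/
theorem le_quadratic_of_lipschitz_gradient {E : Type*} [NormedAddCommGroup E]
    [InnerProductSpace ℝ E] [CompleteSpace E] {f : E → ℝ} {L : ℝ}
    (hdiff : Differentiable ℝ f)
    (hlip : ∀ x y, ‖gradient f x - gradient f y‖ ≤ L * ‖x - y‖) (x v : E) :
    f (x - v) ≤ f x - inner ℝ (gradient f x) v + L / 2 * ‖v‖ ^ 2 := by
  have hderiv : ∀ t : ℝ, HasDerivAt (fun t : ℝ => f (x - t • v))
      (-inner ℝ (gradient f (x - t • v)) v) t := by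
    intro t
    have h1 : HasDerivAt (fun t : ℝ => x - t • v) (-v) t := by
      simpa using ((hasDerivAt_id t).smul_const v).const_sub x
    have h2 := (hdiff (x - t • v)).hasGradientAt.hasFDerivAt.comp_hasDerivAt t h1
    simpa [Function.comp_def] using h2
  have hbound : ∀ t : ℝ, HasDerivAt
      (fun t : ℝ => f x - t * inner ℝ (gradient f x) v + L / 2 * ‖v‖ ^ 2 * t ^ 2)
      (-inner ℝ (gradient f x) v + L * ‖v‖ ^ 2 * t) t := by
    intro t
    have h1 := (((hasDerivAt_id t).mul_const (inner ℝ (gradient f x) v)).const_sub (f x)).add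
      ((hasDerivAt_pow 2 t).const_mul (L / 2 * ‖v‖ ^ 2))
    refine h1.congr_deriv ?_
    push_cast
    ring
  have key := image_le_of_deriv_right_le_deriv_boundary (a := 0) (b := 1)
    (fun t _ => (hderiv t).continuousAt.continuousWithinAt)
    (fun t _ => (hderiv t).hasDerivWithinAt) (by simp)
    (fun t _ => (hbound t).continuousAt.continuousWithinAt)
    (fun t _ => (hbound t).hasDerivWithinAt)
    (by
      intro t ht
      have h1 : inner ℝ (gradient f x - gradient f (x - t • v)) v ≤ L * ‖v‖ ^ 2 * t := by
        calc inner ℝ (gradient f x - gradient f (x - t • v)) v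
            ≤ ‖gradient f x - gradient f (x - t • v)‖ * ‖v‖ := real_inner_le_norm _ _
          _ ≤ L * ‖x - (x - t • v)‖ * ‖v‖ := by gcongr; exact hlip _ _
          _ = L * ‖v‖ ^ 2 * t := by
            rw [sub_sub_cancel, norm_smul, Real.norm_of_nonneg ht.1]; ring
      rw [inner_sub_left] at h1
      linarith)
    (Set.right_mem_Icc.2 zero_le_one)
  simpa using key

/-- If `A` is symmetric with `0 ⪯ A ⪯ c I`, then `A² ⪯ c A`. -/
theorem sq_norm_le_of_symmetric {E : Type*} [NormedAddCommGroup E] [InnerProductSpace ℝ E]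
    (A : E →L[ℝ] E) {c : ℝ} (hc : 0 < c)
    (hsymm : ∀ x y, inner ℝ (A x) y = inner ℝ x (A y))
    (hpos : ∀ x, 0 ≤ inner ℝ (A x) x) (hle : ∀ x, inner ℝ (A x) x ≤ c * ‖x‖ ^ 2) (p : E) :
    ‖A p‖ ^ 2 ≤ c * inner ℝ (A p) p := by
  -- The positive form is tested on `p - c⁻¹ A p`, scaled by `c` to avoid division.
  have h1 := hpos (c • p - A p)
  have h2 := hle (A p)
  have h3 := hsymm (A p) p
  simp only [map_sub, map_smul, inner_sub_left, inner_sub_right, real_inner_smul_left,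
    real_inner_smul_right, h3, real_inner_self_eq_norm_sq] at h1
  have h4 : 0 ≤ c * (c * inner ℝ (A p) p - ‖A p‖ ^ 2) := by nlinarith
  linarith [nonneg_of_mul_nonneg_right h4 hc]

/-- **Global sufficient-stepsize condition for the damped sketch preconditioner.**
If `f` has `L`-Lipschitz gradient (`L > 0`), `B` is symmetric with `0 ⪯ B ⪯ L·I`,
`η > 0`, `M = (B + η I)⁻¹`, and `0 < α ≤ η² / (L(L + η))`, then the update
`θ⁺ = θ − α M ∇f(θ)` satisfies `f(θ⁺) ≤ f(θ) − (α / (2(L + η))) ‖∇f(θ)‖²`. -/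
theorem global_sufficient_stepsize_descent
    (n : ℕ) (f : EuclideanSpace ℝ (Fin n) → ℝ) (L : ℝ) (hL : 0 < L)
    (hdiff : Differentiable ℝ f)
    (hlip : ∀ x y, ‖gradient f x - gradient f y‖ ≤ L * ‖x - y‖)
    (B : Matrix (Fin n) (Fin n) ℝ) (hB : B.PosSemidef)
    (hBL : (L • (1 : Matrix (Fin n) (Fin n) ℝ) - B).PosSemidef)
    (η : ℝ) (hη : 0 < η)
    (M : Matrix (Fin n) (Fin n) ℝ)
    (hM : M = (B + η • (1 : Matrix (Fin n) (Fin n) ℝ))⁻¹)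
    (α : ℝ) (hα : 0 < α) (hαle : α ≤ η ^ 2 / (L * (L + η)))
    (θ : EuclideanSpace ℝ (Fin n)) :
    f (θ - α • Matrix.toEuclideanCLM (𝕜 := ℝ) M (gradient f θ)) ≤
      f θ - (α / (2 * (L + η))) * ‖gradient f θ‖ ^ 2 := by
  have hform : ∀ C : Matrix (Fin n) (Fin n) ℝ, C.PosSemidef →
      ∀ x, 0 ≤ inner ℝ (Matrix.toEuclideanCLM (𝕜 := ℝ) C x) x := fun C hC x =>
    (Matrix.isPositive_toEuclideanLin_iff.2 hC).re_inner_nonneg_left x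
  have hsymmB : ∀ x y, inner ℝ (Matrix.toEuclideanCLM (𝕜 := ℝ) B x) y =
      inner ℝ x (Matrix.toEuclideanCLM (𝕜 := ℝ) B y) := fun x y =>
    (Matrix.isPositive_toEuclideanLin_iff.2 hB).isSymmetric x y
  set A : Matrix (Fin n) (Fin n) ℝ := B + η • 1 with hA
  have hAx : ∀ x, Matrix.toEuclideanCLM (𝕜 := ℝ) A x =
      Matrix.toEuclideanCLM (𝕜 := ℝ) B x + η • x := by
    intro x
    simp [hA]
  have hApos : A.PosDef := Matrix.PosDef.posSemidef_add hB (Matrix.PosDef.one.smul hη)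
  set g := gradient f θ with hg
  set p := Matrix.toEuclideanCLM (𝕜 := ℝ) M g with hp
  have hAp : Matrix.toEuclideanCLM (𝕜 := ℝ) A p = g := by
    rw [hp, hM, ← mul_apply_eq_comp, ← map_mul,
      Matrix.mul_nonsing_inv A ((Matrix.isUnit_iff_isUnit_det A).1 hApos.isUnit), map_one]
    rfl
  have hLη : 0 < L + η := by positivity
  have hgp : ‖g‖ ^ 2 ≤ (L + η) * inner ℝ g p := by
    have h := sq_norm_le_of_symmetric (Matrix.toEuclideanCLM (𝕜 := ℝ) A) hLη
      (by
        intro x y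
        rw [hAx, hAx, inner_add_left, inner_add_right, hsymmB, real_inner_smul_left,
          real_inner_smul_right])
      (hform A hApos.posSemidef)
      (by
        intro x
        have h := hform _ hBL x
        simp only [map_sub, map_smul, map_one, sub_apply,
          smul_apply, one_apply_eq_self, inner_sub_left,
          real_inner_smul_left, real_inner_self_eq_norm_sq] at h
        rw [hAx, inner_add_left, real_inner_smul_left, real_inner_self_eq_norm_sq]
        linarith) p
    rwa [hAp] at h
  have hpg : η * ‖p‖ ≤ ‖g‖ := by
    have h1 : η * ‖p‖ ^ 2 ≤ inner ℝ g p := by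
      have h := hform B hB p
      rw [← hAp, hAx, inner_add_left, real_inner_smul_left, real_inner_self_eq_norm_sq]
      linarith
    have h2 := real_inner_le_norm g p
    rcases (norm_nonneg p).eq_or_lt with h0 | h0
    · rw [← h0]; simp
    · exact le_of_mul_le_mul_right (by nlinarith) h0
  have hdesc := le_quadratic_of_lipschitz_gradient hdiff hlip θ (α • p)
  rw [real_inner_smul_right, norm_smul, Real.norm_of_nonneg hα.le, ← hg] at hdesc
  refine hdesc.trans ?_
  have hlin : ‖g‖ ^ 2 / (L + η) ≤ inner ℝ g p := by
    rw [div_le_iff₀ hLη]; linarith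
  have hquad : L * α * ‖p‖ ^ 2 ≤ ‖g‖ ^ 2 / (L + η) := by
    calc L * α * ‖p‖ ^ 2 ≤ L * (η ^ 2 / (L * (L + η))) * ‖p‖ ^ 2 := by gcongr
      _ = (η * ‖p‖) ^ 2 / (L + η) := by field_simp
      _ ≤ ‖g‖ ^ 2 / (L + η) := by gcongr
  have e : α / (2 * (L + η)) * ‖g‖ ^ 2 = α / 2 * (‖g‖ ^ 2 / (L + η)) := by field_simp
  rw [e]
  have h1 := mul_le_mul_of_nonneg_left hlin hα.le
  have h2 := mul_le_mul_of_nonneg_left hquad (half_pos hα).le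
  linarith
end

section
/- Let v₁, …, v_n be an orthonormal basis of ℝⁿ and λ₁, …, λ_n ∈ ℝ, and let H = Σ_{i=1}^n λᵢ vᵢ vᵢᵀ. Fix k ≤ n with λᵢ ≥ 0 for i ≤ k, let B = Σ_{i=1}^k λᵢ vᵢ vᵢᵀ, η > 0, and P = (B + ηI)⁻¹. Then P H vᵢ = (λᵢ/(λᵢ + η)) vᵢ for each i ≤ k and P H vⱼ = (λⱼ/η) vⱼ for each j > k; that is, the preconditioned Hessian P H has eigenvalues λᵢ/(λᵢ + η) on the sketched subspace and λⱼ/η on its orthogonal complement. -/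
/-!
Any partial sum `Σ_{i ∈ s} λᵢ vᵢ vᵢᵀ` acts diagonally on the orthonormal family `v`
(`sketch_mulVec`). Hence each `vᵢ` is an eigenvector of `H` with eigenvalue `λᵢ`, and of `B + η I`
with eigenvalue `λᵢ + η` (sketched) or `η` (unsketched). Since `B` is positive semidefinite, `B + η I`
is positive definite, so its nonsingular inverse is a genuine inverse and has the reciprocal
eigenvalues on the same eigenvectors.
-/

lemma sketch_mulVec {n : ℕ} {v : Fin n → EuclideanSpace ℝ (Fin n)} (hv : Orthonormal ℝ v)
    (lam : Fin n → ℝ) (s : Finset (Fin n)) (j : Fin n) :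
    (∑ i ∈ s, lam i • Matrix.vecMulVec (v i) (v i)).mulVec (v j) =
      (if j ∈ s then lam j else 0) • (v j).ofLp := by
  have horth (i : Fin n) : (v i).ofLp ⬝ᵥ (v j).ofLp = if i = j then 1 else 0 := by
    rw [← orthonormal_iff_ite.mp hv i j, EuclideanSpace.inner_eq_star_dotProduct, dotProduct_comm]
    simp
  simp [Matrix.sum_mulVec, Matrix.smul_mulVec, Matrix.vecMulVec_mulVec, horth]

lemma sketch_posSemidef {n : ℕ} (v : Fin n → EuclideanSpace ℝ (Fin n))
    (lam : Fin n → ℝ) (s : Finset (Fin n)) (hlam : ∀ i ∈ s, 0 ≤ lam i) :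
    (∑ i ∈ s, lam i • Matrix.vecMulVec (v i) (v i)).PosSemidef := by
  refine Matrix.posSemidef_sum s fun i hi => Matrix.PosSemidef.smul ?_ (hlam i hi)
  simpa using Matrix.posSemidef_vecMulVec_self_star (v i).ofLp

lemma inv_mulVec_of_eigenvector {n : ℕ} {M : Matrix (Fin n) (Fin n) ℝ} (hM : IsUnit M.det)
    {x : Fin n → ℝ} {c : ℝ} (hc : c ≠ 0) (hx : M.mulVec x = c • x) :
    M⁻¹.mulVec x = c⁻¹ • x := by
  have h : M⁻¹.mulVec (M.mulVec x) = x := by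
    rw [Matrix.mulVec_mulVec, Matrix.nonsing_inv_mul _ hM, Matrix.one_mulVec]
  rw [hx, Matrix.mulVec_smul] at h
  rw [eq_inv_smul_iff₀ hc, h]

/-- **Spectrum of the preconditioned Hessian.**
Let `v₁, …, v_n` be an orthonormal basis of `ℝⁿ`, `H = Σᵢ λᵢ vᵢ vᵢᵀ`, and for `k ≤ n` with
`λᵢ ≥ 0` for the first `k` indices, let `B = Σ_{i<k} λᵢ vᵢ vᵢᵀ`, `η > 0`,
`P = (B + η I)⁻¹`.  Then `P H vᵢ = (λᵢ/(λᵢ+η)) vᵢ` for sketched indices `i < k` and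
`P H vⱼ = (λⱼ/η) vⱼ` for unsketched indices `j ≥ k`. -/
theorem preconditioned_hessian_spectrum
    (n : ℕ) (v : Fin n → EuclideanSpace ℝ (Fin n)) (hv : Orthonormal ℝ v)
    (lam : Fin n → ℝ) (k : ℕ) (hk : k ≤ n)
    (hlam : ∀ i : Fin n, (i : ℕ) < k → 0 ≤ lam i)
    (H B P : Matrix (Fin n) (Fin n) ℝ)
    (hH : H = ∑ i, lam i • Matrix.vecMulVec (v i) (v i))
    (hB : B = ∑ i ∈ Finset.univ.filter (fun i : Fin n => (i : ℕ) < k),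
        lam i • Matrix.vecMulVec (v i) (v i))
    (η : ℝ) (hη : 0 < η)
    (hP : P = (B + η • (1 : Matrix (Fin n) (Fin n) ℝ))⁻¹) :
    (∀ i : Fin n, (i : ℕ) < k →
      Matrix.toEuclideanCLM (𝕜 := ℝ) (P * H) (v i) = (lam i / (lam i + η)) • v i) ∧
    (∀ j : Fin n, k ≤ (j : ℕ) →
      Matrix.toEuclideanCLM (𝕜 := ℝ) (P * H) (v j) = (lam j / η) • v j) := by
  have hunit : IsUnit (B + η • (1 : Matrix (Fin n) (Fin n) ℝ)).det := by
    have hBpos : B.PosSemidef := hB ▸ sketch_posSemidef v lam _ (by simpa using hlam)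
    have hpos : (B + η • (1 : Matrix (Fin n) (Fin n) ℝ)).PosDef :=
      Matrix.PosDef.posSemidef_add hBpos (Matrix.PosDef.one.smul hη)
    exact hpos.det_pos.ne'.isUnit
  have hHv (i : Fin n) : H.mulVec (v i) = lam i • (v i).ofLp := by
    rw [hH, sketch_mulVec hv]
    simp
  have hMv (i : Fin n) : (B + η • (1 : Matrix (Fin n) (Fin n) ℝ)).mulVec (v i) =
      ((if (i : ℕ) < k then lam i else 0) + η) • (v i).ofLp := by
    rw [Matrix.add_mulVec, hB, sketch_mulVec hv, add_smul, Matrix.smul_mulVec, Matrix.one_mulVec]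
    simp
  have key (i : Fin n) (c : ℝ) (hc : c ≠ 0)
      (h : (B + η • (1 : Matrix (Fin n) (Fin n) ℝ)).mulVec (v i) = c • (v i).ofLp) :
      Matrix.toEuclideanCLM (𝕜 := ℝ) (P * H) (v i) = (lam i / c) • v i := by
    apply WithLp.ofLp_injective 2
    rw [Matrix.ofLp_toEuclideanCLM, ← Matrix.mulVec_mulVec, hHv, Matrix.mulVec_smul, hP,
      inv_mulVec_of_eigenvector hunit hc h, smul_smul, WithLp.ofLp_smul, div_eq_mul_inv]
  refine ⟨fun i hi => key i _ ?_ ?_, fun j hj => key j _ hη.ne' ?_⟩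
  · exact (add_pos_of_nonneg_of_pos (hlam i hi) hη).ne'
  · rw [hMv, if_pos hi]
  · rw [hMv, if_neg hj.not_gt, zero_add]
end
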